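/- Let n ≥ 1, L > 0, and let f : ℝⁿ × ℝⁿ → ℝⁿ be L-Lipschitz. Fix 0 < ε < 1/4 and a > max{5L, 5}, and set k_p = −(ε(1+ε) + (1+2ε)a), k_i = −ε(1+ε)a, k_d = −(a + 1 + 2ε). Then for any setpoint y* ∈ ℝⁿ and any differentiable functions x₁, x₂ : [0,∞) → ℝⁿ satisfying x₁'(t) = x₂(t) and x₂'(t) = f(x₁(t), x₂(t)) + k_p·(x₁(t) − y*) + k_i·∫₀ᵗ (x₁(s) − y*) ds + k_d·x₂(t) for all t ≥ 0, there exist constants C > 0 and μ > 0 such that ‖x₁(t) − y*‖ + ‖x₂(t)‖ ≤ C·e^{−μt} for all t ≥ 0. -/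

import Mathlib

open Real MeasureTheory intervalIntegral

/-!
With `z` the integral of the error `e`, shifted so that the equilibrium is the origin, and `v = e'`,
the gains are those for which `w = v + b e + c z` solves `w' = g - a w`, where `g` is the deviation
of `f` from its value at the setpoint. Expanding `‖w‖²` and recognising the cross terms as a
derivative gives the identity
`(b‖e‖² + 2c⟪e, z⟫ + bc‖z‖²)' = ‖w‖² - ‖v‖² - (b² - 2c)‖e‖² - c²‖z‖²`.
If `1 + 2c ≤ b²`, it shows that `(e, v)` is no larger than `w` in the `L²` sense, while `w` is no
larger than `L / a` times `(e, v)`, so that `L < a` closes the loop. The matching Lyapunov function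
is `‖w‖²` plus `a` times the bracket on the left. For `b = 1 + 2ε` and `c = ε(1 + ε)` one has
`b² = 1 + 4c`.
-/

section LyapunovMethod

open Set

lemma le_mul_exp_of_hasDerivWithinAt_le {V V' : ℝ → ℝ} {μ : ℝ}
    (hV : ∀ t, 0 ≤ t → HasDerivWithinAt V (V' t) (Ici 0) t)
    (hV' : ∀ t, 0 ≤ t → V' t ≤ -μ * V t) {t : ℝ} (ht : 0 ≤ t) :
    V t ≤ V 0 * exp (-μ * t) := by
  have hcont : ContinuousOn V (Icc 0 t) := fun s hs =>
    (hV s hs.1).continuousWithinAt.mono Icc_subset_Ici_self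
  have hslope : ∀ s ∈ Ico 0 t, ∀ r, V' s < r →
      ∃ᶠ u in nhdsWithin s (Ioi s), (u - s)⁻¹ * (V u - V s) < r := fun s hs r hr =>
    ((hV s hs.1).mono (Ici_subset_Ici.2 hs.1)).liminf_right_slope_le hr
  have hle := le_gronwallBound_of_liminf_deriv_right_le (K := -μ) (ε := 0) hcont hslope le_rfl
    (fun s hs => by simpa only [add_zero] using hV' s hs.1) t (right_mem_Icc.2 ht)
  rwa [gronwallBound_ε0, sub_zero] at hle

lemma sqrt_le_mul_exp_of_lyapunov {V V' N : ℝ → ℝ} {m M δ : ℝ}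
    (hm : 0 < m) (hM : 0 < M) (hδ : 0 ≤ δ)
    (hV : ∀ t, 0 ≤ t → HasDerivWithinAt V (V' t) (Ici 0) t)
    (hlower : ∀ t, 0 ≤ t → m * N t ≤ V t) (hupper : ∀ t, 0 ≤ t → V t ≤ M * N t)
    (hV' : ∀ t, 0 ≤ t → V' t ≤ -δ * N t) {t : ℝ} (ht : 0 ≤ t) :
    √(N t) ≤ √(V 0 / m) * exp (-(δ / (2 * M)) * t) := by
  have hdecay : V t ≤ V 0 * exp (-(δ / M) * t) := by
    refine le_mul_exp_of_hasDerivWithinAt_le hV (fun s hs => (hV' s hs).trans ?_) ht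
    calc -δ * N s = -(δ / M) * (M * N s) := by field_simp
      _ ≤ -(δ / M) * V s :=
        mul_le_mul_of_nonpos_left (hupper s hs) (neg_nonpos.2 (div_nonneg hδ hM.le))
  have hexp : exp (-(δ / M) * t) = exp (-(δ / (2 * M)) * t) ^ 2 := by
    rw [← exp_nat_mul]
    congr 1
    push_cast
    field_simp
  have hN : N t ≤ V 0 / m * exp (-(δ / (2 * M)) * t) ^ 2 := by
    rw [← hexp, div_mul_eq_mul_div, le_div_iff₀' hm]
    exact (hlower t ht).trans hdecay
  calc √(N t) ≤ √(V 0 / m * exp (-(δ / (2 * M)) * t) ^ 2) := sqrt_le_sqrt hN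
    _ = √(V 0 / m) * exp (-(δ / (2 * M)) * t) := by
      rw [sqrt_mul' _ (sq_nonneg _), sqrt_sq (exp_pos _).le]

end LyapunovMethod

lemma hasDerivWithinAt_integral_Ici {F : Type*} [NormedAddCommGroup F] [NormedSpace ℝ F]
    [CompleteSpace F] {x : ℝ → F} {a t : ℝ} (hx : ContinuousOn x (Set.Ici a)) (ht : a ≤ t) :
    HasDerivWithinAt (fun u => ∫ s in a..u, x s) (x t) (Set.Ici a) t := by
  have hext : Continuous fun s => x (max a s) :=
    hx.comp_continuous (by fun_prop) fun s => le_max_left a s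
  have hderiv : HasDerivAt (fun u => ∫ s in a..u, x (max a s)) (x t) t := by
    simpa only [max_eq_right ht] using (hext.integral_hasStrictDerivAt a t).hasDerivAt
  have hint : ∀ u ∈ Set.Ici a, ∫ s in a..u, x s = ∫ s in a..u, x (max a s) := fun u hu =>
    integral_congr fun s hs => by
      rw [Set.uIcc_of_le hu] at hs
      simp only [max_eq_right hs.1]
  exact hderiv.hasDerivWithinAt.congr hint (hint t ht)

section ErrorDynamics

open scoped RealInnerProductSpace

variable {E : Type*} [NormedAddCommGroup E] [InnerProductSpace ℝ E] {a b c L : ℝ}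

/-- The combination `v + b e + c z` of the integral `z` of the error, the error `e` and its
derivative `v`, i.e. the differential operator `D² + b D + c` applied to `z`. -/
def filteredError (b c : ℝ) (z e v : E) : E := v + b • e + c • z

/-- The quadratic form in the integral `z` of the error and the error `e` whose derivative along
`z' = e`, `e' = v` is the excess of `‖filteredError b c z e v‖ ^ 2` over a weighted sum of the
squared norms of `z`, `e` and `v`. -/
def errorStorage (b c : ℝ) (z e : E) : ℝ := b * ‖e‖ ^ 2 + 2 * c * ⟪e, z⟫ + b * c * ‖z‖ ^ 2

/-- The Lyapunov function of the PID error dynamics, in the coordinates given by the integral `z`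
of the error, the error `e` and the filtered error `w`. -/
def pidLyapunov (a b c : ℝ) (z e w : E) : ℝ := ‖w‖ ^ 2 + a * errorStorage b c z e

lemma norm_filteredError_sq (z e v : E) :
    ‖filteredError b c z e v‖ ^ 2 = ‖v‖ ^ 2 + b ^ 2 * ‖e‖ ^ 2 + c ^ 2 * ‖z‖ ^ 2
      + 2 * b * ⟪e, v⟫ + 2 * c * ⟪v, z⟫ + 2 * b * c * ⟪z, e⟫ := by
  rw [filteredError, norm_add_sq_real, norm_add_sq_real, inner_add_left]
  simp only [norm_smul, inner_smul_left, inner_smul_right, mul_pow, norm_eq_abs, sq_abs,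
    RCLike.conj_to_real]
  rw [real_inner_comm e v, real_inner_comm e z]
  ring

lemma norm_add_norm_le_filteredError (hb : 0 ≤ b) (hc : 0 ≤ c) (z e v : E) :
    ‖e‖ + ‖v‖ ≤ (2 + b + c) * √(‖z‖ ^ 2 + ‖e‖ ^ 2 + ‖filteredError b c z e v‖ ^ 2) := by
  set w := filteredError b c z e v with hw
  set r := √(‖z‖ ^ 2 + ‖e‖ ^ 2 + ‖w‖ ^ 2)
  have hz : ‖z‖ ≤ r := le_sqrt_of_sq_le (by nlinarith)
  have he : ‖e‖ ≤ r := le_sqrt_of_sq_le (by nlinarith)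
  have hwr : ‖w‖ ≤ r := le_sqrt_of_sq_le (by nlinarith)
  have hv : ‖v‖ ≤ ‖w‖ + b * ‖e‖ + c * ‖z‖ :=
    calc ‖v‖ = ‖w - b • e - c • z‖ := by rw [hw, filteredError]; congr 1; module
      _ ≤ ‖w‖ + ‖b • e‖ + ‖c • z‖ := norm_sub_le_of_le (norm_sub_le _ _) le_rfl
      _ = ‖w‖ + b * ‖e‖ + c * ‖z‖ := by
        rw [norm_smul, norm_smul, norm_of_nonneg hb, norm_of_nonneg hc]
  calc ‖e‖ + ‖v‖ ≤ r + (r + b * r + c * r) := add_le_add he (hv.trans (by gcongr))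
    _ = (2 + b + c) * r := by ring

lemma le_errorStorage (hb : 0 < b) (z e : E) :
    b / 2 * ‖e‖ ^ 2 + c * (b ^ 2 - 2 * c) / b * ‖z‖ ^ 2 ≤ errorStorage b c z e := by
  have hsq : 0 ≤ ‖b • e + (2 * c) • z‖ ^ 2 / (2 * b) := by positivity
  rw [norm_add_sq_real, norm_smul, norm_smul, inner_smul_left, inner_smul_right] at hsq
  simp only [mul_pow, norm_eq_abs, sq_abs, RCLike.conj_to_real] at hsq
  rw [errorStorage, ← sub_nonneg]
  convert hsq using 1
  field_simp
  ring

lemma errorStorage_le (hc : 0 ≤ c) (z e : E) :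
    errorStorage b c z e ≤ (b + c) * ‖e‖ ^ 2 + (b * c + c) * ‖z‖ ^ 2 := by
  have hinner : 2 * ⟪e, z⟫ ≤ ‖e‖ ^ 2 + ‖z‖ ^ 2 := by
    linarith [real_inner_le_norm e z, two_mul_le_add_sq ‖e‖ ‖z‖]
  rw [errorStorage]
  linarith [mul_le_mul_of_nonneg_left hinner hc]

lemma exists_mul_le_pidLyapunov (ha : 0 < a) (hb : 0 < b) (hc : 0 < c) (hbc : 2 * c < b ^ 2) :
    ∃ m > 0, ∀ z e w : E, m * (‖z‖ ^ 2 + ‖e‖ ^ 2 + ‖w‖ ^ 2) ≤ pidLyapunov a b c z e w := by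
  have : 0 < b ^ 2 - 2 * c := sub_pos.2 hbc
  refine ⟨min (a * (c * (b ^ 2 - 2 * c) / b)) (min (a * (b / 2)) 1), by positivity,
    fun z e w => ?_⟩
  set m := min (a * (c * (b ^ 2 - 2 * c) / b)) (min (a * (b / 2)) 1)
  have hmz : m ≤ a * (c * (b ^ 2 - 2 * c) / b) := min_le_left _ _
  have hme : m ≤ a * (b / 2) := (min_le_right _ _).trans (min_le_left _ _)
  have hmw : m ≤ 1 := (min_le_right _ _).trans (min_le_right _ _)
  calc m * (‖z‖ ^ 2 + ‖e‖ ^ 2 + ‖w‖ ^ 2)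
      = m * ‖z‖ ^ 2 + m * ‖e‖ ^ 2 + m * ‖w‖ ^ 2 := by ring
    _ ≤ a * (c * (b ^ 2 - 2 * c) / b) * ‖z‖ ^ 2 + a * (b / 2) * ‖e‖ ^ 2 + 1 * ‖w‖ ^ 2 := by
      gcongr
    _ = ‖w‖ ^ 2 + a * (b / 2 * ‖e‖ ^ 2 + c * (b ^ 2 - 2 * c) / b * ‖z‖ ^ 2) := by ring
    _ ≤ pidLyapunov a b c z e w := by
      rw [pidLyapunov]
      gcongr
      exact le_errorStorage hb z e

lemma exists_pidLyapunov_le_mul (ha : 0 ≤ a) (hb : 0 ≤ b) (hc : 0 ≤ c) :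
    ∃ M > 0, ∀ z e w : E, pidLyapunov a b c z e w ≤ M * (‖z‖ ^ 2 + ‖e‖ ^ 2 + ‖w‖ ^ 2) := by
  refine ⟨1 + a * (b + c + b * c), by positivity, fun z e w => ?_⟩
  calc pidLyapunov a b c z e w
      ≤ ‖w‖ ^ 2 + a * ((b + c) * ‖e‖ ^ 2 + (b * c + c) * ‖z‖ ^ 2) := by
        rw [pidLyapunov]
        gcongr
        exact errorStorage_le hc z e
    _ ≤ (1 + a * (b + c + b * c)) * (‖z‖ ^ 2 + ‖e‖ ^ 2 + ‖w‖ ^ 2) := by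
      have : 0 ≤ (1 + a * b) * ‖z‖ ^ 2 + (1 + a * (b * c)) * ‖e‖ ^ 2
          + a * (b + c + b * c) * ‖w‖ ^ 2 := by positivity
      linarith

lemma two_mul_inner_le_of_norm_le_mul_sqrt {w g : E} {r : ℝ} (hL : 0 ≤ L) (hr : 0 ≤ r)
    (hg : ‖g‖ ≤ L * √r) : 2 * ⟪w, g⟫ ≤ L * (‖w‖ ^ 2 + r) :=
  calc 2 * ⟪w, g⟫ ≤ 2 * (‖w‖ * (L * √r)) := by
        gcongr
        exact (real_inner_le_norm w g).trans (by gcongr)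
    _ = L * (2 * ‖w‖ * √r) := by ring
    _ ≤ L * (‖w‖ ^ 2 + √r ^ 2) := by
      gcongr
      exact two_mul_le_add_sq _ _
    _ = L * (‖w‖ ^ 2 + r) := by rw [sq_sqrt hr]

lemma pidLyapunov_deriv_le (hL : 0 ≤ L) (hLa : L < a) (hbc : 1 + 2 * c ≤ b ^ 2) {z e v w g : E}
    (hg : ‖g‖ ≤ L * √(‖e‖ ^ 2 + ‖v‖ ^ 2)) :
    2 * ⟪w, g - a • w⟫
        + a * (‖w‖ ^ 2 - ‖v‖ ^ 2 - (b ^ 2 - 2 * c) * ‖e‖ ^ 2 - c ^ 2 * ‖z‖ ^ 2)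
      ≤ -min (a - L) (a * c ^ 2) * (‖z‖ ^ 2 + ‖e‖ ^ 2 + ‖w‖ ^ 2) := by
  have ha : 0 < a := hL.trans_lt hLa
  set δ := min (a - L) (a * c ^ 2)
  have hδL : δ ≤ a - L := min_le_left _ _
  have hδc : δ ≤ a * c ^ 2 := min_le_right _ _
  have hyoung : 2 * ⟪w, g⟫ ≤ L * (‖w‖ ^ 2 + (‖e‖ ^ 2 + ‖v‖ ^ 2)) :=
    two_mul_inner_le_of_norm_le_mul_sqrt hL (by positivity) hg
  have he : ‖e‖ ^ 2 ≤ (b ^ 2 - 2 * c) * ‖e‖ ^ 2 :=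
    le_mul_of_one_le_left (sq_nonneg _) (by linarith)
  have hv : 0 ≤ (a - L) * ‖v‖ ^ 2 := mul_nonneg (sub_nonneg.2 hLa.le) (sq_nonneg _)
  calc 2 * ⟪w, g - a • w⟫
        + a * (‖w‖ ^ 2 - ‖v‖ ^ 2 - (b ^ 2 - 2 * c) * ‖e‖ ^ 2 - c ^ 2 * ‖z‖ ^ 2)
      = 2 * ⟪w, g⟫
        - a * (‖w‖ ^ 2 + ‖v‖ ^ 2 + (b ^ 2 - 2 * c) * ‖e‖ ^ 2 + c ^ 2 * ‖z‖ ^ 2) := by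
        rw [inner_sub_right, real_inner_smul_right, real_inner_self_eq_norm_sq]
        ring
    _ ≤ -((a * c ^ 2) * ‖z‖ ^ 2 + (a - L) * ‖e‖ ^ 2 + (a - L) * ‖w‖ ^ 2) := by
      linarith [mul_le_mul_of_nonneg_left he ha.le]
    _ ≤ -(δ * ‖z‖ ^ 2 + δ * ‖e‖ ^ 2 + δ * ‖w‖ ^ 2) := by gcongr
    _ = -δ * (‖z‖ ^ 2 + ‖e‖ ^ 2 + ‖w‖ ^ 2) := by ring

variable {s : Set ℝ} {t : ℝ} {z e v g : ℝ → E}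

lemma hasDerivWithinAt_errorStorage (hz : HasDerivWithinAt z (e t) s t)
    (he : HasDerivWithinAt e (v t) s t) :
    HasDerivWithinAt (fun u => errorStorage b c (z u) (e u))
      (‖filteredError b c (z t) (e t) (v t)‖ ^ 2 - ‖v t‖ ^ 2
        - (b ^ 2 - 2 * c) * ‖e t‖ ^ 2 - c ^ 2 * ‖z t‖ ^ 2) s t := by
  refine (((he.norm_sq.const_mul b).add ((he.inner ℝ hz).const_mul (2 * c))).add
    (hz.norm_sq.const_mul (b * c))).congr_deriv ?_
  rw [norm_filteredError_sq, real_inner_self_eq_norm_sq]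
  ring

lemma hasDerivWithinAt_filteredError (hz : HasDerivWithinAt z (e t) s t)
    (he : HasDerivWithinAt e (v t) s t)
    (hv : HasDerivWithinAt v
      (g t - (c + b * a) • e t - (c * a) • z t - (a + b) • v t) s t) :
    HasDerivWithinAt (fun u => filteredError b c (z u) (e u) (v u))
      (g t - a • filteredError b c (z t) (e t) (v t)) s t := by
  refine ((hv.add (he.const_smul b)).add (hz.const_smul c)).congr_deriv ?_
  rw [filteredError]
  module

theorem exists_exp_bound_of_error_dynamics (hL : 0 ≤ L) (hLa : L < a) (hb : 0 < b) (hc : 0 < c)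
    (hbc : 1 + 2 * c ≤ b ^ 2)
    (hz : ∀ t, 0 ≤ t → HasDerivWithinAt z (e t) (Set.Ici 0) t)
    (he : ∀ t, 0 ≤ t → HasDerivWithinAt e (v t) (Set.Ici 0) t)
    (hv : ∀ t, 0 ≤ t → HasDerivWithinAt v
      (g t - (c + b * a) • e t - (c * a) • z t - (a + b) • v t) (Set.Ici 0) t)
    (hg : ∀ t, 0 ≤ t → ‖g t‖ ≤ L * √(‖e t‖ ^ 2 + ‖v t‖ ^ 2)) :
    ∃ C > 0, ∃ μ > 0, ∀ t, 0 ≤ t → ‖e t‖ + ‖v t‖ ≤ C * exp (-μ * t) := by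
  have ha : 0 < a := hL.trans_lt hLa
  obtain ⟨m, hm, hlower⟩ := exists_mul_le_pidLyapunov (E := E) ha hb hc (by linarith)
  obtain ⟨M, hM, hupper⟩ := exists_pidLyapunov_le_mul (E := E) ha.le hb.le hc.le
  set δ := min (a - L) (a * c ^ 2)
  have hδ : 0 < δ := lt_min (sub_pos.2 hLa) (by positivity)
  set w : ℝ → E := fun t => filteredError b c (z t) (e t) (v t)
  set V : ℝ → ℝ := fun t => pidLyapunov a b c (z t) (e t) (w t)
  have hV : ∀ t, 0 ≤ t → HasDerivWithinAt V (2 * ⟪w t, g t - a • w t⟫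
      + a * (‖w t‖ ^ 2 - ‖v t‖ ^ 2 - (b ^ 2 - 2 * c) * ‖e t‖ ^ 2 - c ^ 2 * ‖z t‖ ^ 2))
      (Set.Ici 0) t := fun t ht =>
    (hasDerivWithinAt_filteredError (hz t ht) (he t ht) (hv t ht)).norm_sq.add
      ((hasDerivWithinAt_errorStorage (hz t ht) (he t ht)).const_mul a)
  have hdecay : ∀ t, 0 ≤ t → √(‖z t‖ ^ 2 + ‖e t‖ ^ 2 + ‖w t‖ ^ 2)
      ≤ √(V 0 / m) * exp (-(δ / (2 * M)) * t) := fun t ht =>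
    sqrt_le_mul_exp_of_lyapunov hm hM hδ.le hV (fun s _ => hlower _ _ _) (fun s _ => hupper _ _ _)
      (fun s hs => pidLyapunov_deriv_le hL hLa hbc (hg s hs)) ht
  refine ⟨(2 + b + c) * (√(V 0 / m) + 1), by positivity, δ / (2 * M), by positivity,
    fun t ht => ?_⟩
  calc ‖e t‖ + ‖v t‖ ≤ (2 + b + c) * √(‖z t‖ ^ 2 + ‖e t‖ ^ 2 + ‖w t‖ ^ 2) :=
        norm_add_norm_le_filteredError hb.le hc.le (z t) (e t) (v t)
    _ ≤ (2 + b + c) * ((√(V 0 / m) + 1) * exp (-(δ / (2 * M)) * t)) := by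
      gcongr
      exact (hdecay t ht).trans (by gcongr; linarith)
    _ = (2 + b + c) * (√(V 0 / m) + 1) * exp (-(δ / (2 * M)) * t) := by ring

end ErrorDynamics

theorem pid_second_order_global_stabilization_explicit_gains_general
    {E : Type*} [NormedAddCommGroup E] [InnerProductSpace ℝ E] [CompleteSpace E]
    {f : E × E → E} {ystar : E} {a b c L : ℝ} (hL : 0 ≤ L)
    (hf : ∀ x : E × E, ‖f x - f (ystar, 0)‖ ≤ L * √(‖x.1 - ystar‖ ^ 2 + ‖x.2‖ ^ 2))
    (hLa : L < a) (hb : 0 < b) (hc : 0 < c) (hbc : 1 + 2 * c ≤ b ^ 2)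
    {kp ki kd : ℝ} (hkp : kp = -(c + b * a)) (hki : ki = -(c * a)) (hkd : kd = -(a + b))
    {x1 x2 : ℝ → E}
    (hx1 : ∀ t, 0 ≤ t → HasDerivWithinAt x1 (x2 t) (Set.Ici 0) t)
    (hx2 : ∀ t, 0 ≤ t → HasDerivWithinAt x2
      (f (x1 t, x2 t) + kp • (x1 t - ystar) + ki • (∫ s in (0 : ℝ)..t, (x1 s - ystar))
        + kd • x2 t) (Set.Ici 0) t) :
    ∃ C > 0, ∃ μ > 0, ∀ t, 0 ≤ t → ‖x1 t - ystar‖ + ‖x2 t‖ ≤ C * exp (-μ * t) := by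
  have ha : 0 < a := hL.trans_lt hLa
  have he : ∀ t, 0 ≤ t → HasDerivWithinAt (fun s => x1 s - ystar) (x2 t) (Set.Ici 0) t :=
    fun t ht => (hx1 t ht).sub_const ystar
  -- The added constant is minus the equilibrium value of the integral, where `f (ystar, 0)` is
  -- balanced by the integral action.
  set z : ℝ → E := fun t => (∫ s in (0 : ℝ)..t, (x1 s - ystar)) - (c * a)⁻¹ • f (ystar, 0)
  have hz : ∀ t, 0 ≤ t → HasDerivWithinAt z (x1 t - ystar) (Set.Ici 0) t := fun t ht =>
    (hasDerivWithinAt_integral_Ici (fun s hs => (he s hs).continuousWithinAt) ht).sub_const _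
  refine exists_exp_bound_of_error_dynamics (g := fun t => f (x1 t, x2 t) - f (ystar, 0))
    hL hLa hb hc hbc hz he (fun t ht => (hx2 t ht).congr_deriv ?_) (fun t _ => hf (x1 t, x2 t))
  have hshift : (c * a) • z t = (c * a) • (∫ s in (0 : ℝ)..t, (x1 s - ystar)) - f (ystar, 0) := by
    rw [smul_sub, smul_inv_smul₀ (mul_pos hc ha).ne']
  rw [hshift, hkp, hki, hkd]
  module

theorem pid_second_order_global_stabilization_explicit_gains
    (n : ℕ) (hn : 1 ≤ n) (L : ℝ) (hL : 0 < L)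
    (f : EuclideanSpace ℝ (Fin n) × EuclideanSpace ℝ (Fin n) → EuclideanSpace ℝ (Fin n))
    (hf : ∀ x y : EuclideanSpace ℝ (Fin n) × EuclideanSpace ℝ (Fin n),
      ‖f x - f y‖ ≤ L * Real.sqrt (‖x.1 - y.1‖ ^ 2 + ‖x.2 - y.2‖ ^ 2))
    (ε a : ℝ) (hε0 : 0 < ε) (hε : ε < 1 / 4) (ha : max (5 * L) 5 < a)
    (kp ki kd : ℝ)
    (hkp : kp = -(ε * (1 + ε) + (1 + 2 * ε) * a))
    (hki : ki = -(ε * (1 + ε) * a))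
    (hkd : kd = -(a + 1 + 2 * ε))
    (ystar : EuclideanSpace ℝ (Fin n))
    (x1 x2 : ℝ → EuclideanSpace ℝ (Fin n))
    (hx1 : ∀ t, 0 ≤ t → HasDerivAt x1 (x2 t) t)
    (hx2 : ∀ t, 0 ≤ t → HasDerivAt x2
      (f (x1 t, x2 t) + kp • (x1 t - ystar)
        + ki • (∫ s in (0:ℝ)..t, (x1 s - ystar))
        + kd • x2 t) t) :
    ∃ C > (0:ℝ), ∃ μ > (0:ℝ), ∀ t, 0 ≤ t →
      ‖x1 t - ystar‖ + ‖x2 t‖ ≤ C * Real.exp (-μ * t) := by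
  have hLa : L < a := by linarith [(le_max_left (5 * L) 5).trans_lt ha]
  exact pid_second_order_global_stabilization_explicit_gains_general hL.le
    (fun x => by simpa only [sub_zero] using hf x (ystar, 0)) hLa (by positivity) (by positivity)
    (by nlinarith) hkp hki (hkd.trans (by ring))
    (fun t ht => (hx1 t ht).hasDerivWithinAt) (fun t ht => (hx2 t ht).hasDerivWithinAt)
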